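/- Let A be a bounded self-adjoint operator on H with finite spectrum, and let O_A = {uAu* : u ∈ U_c(H)}. Then the map π_A(u) = uAu* has a continuous local cross section: there exist a constant C > 0 and a continuous map θ : {b ∈ O_A : ‖b − A‖ < C} → U_c(H) such that θ(b)·A·θ(b)* = b for every b in this set. -/

import Mathlib

/-!
Let `S` be the spectrum of `a` and `p_z`, `z ∈ S`, the Lagrange basis polynomials of `S`. For every
`b` annihilated by `∏_{z ∈ S} (X - z)`, the `p_z(b)` are complementary idempotents with
`b p_z(b) = z p_z(b)`, so `W b = ∑_z p_z(b) p_z(a)` satisfies `b * W b = W b * a`. As `W` is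
polynomial in `b` and `W a = 1`, it is continuous, and invertible near `a`. If `b` is in the orbit
of `a`, it is normal, so the `p_z(b)` are self-adjoint; hence `star (W b)` intertwines in the
opposite direction, `|W b|` commutes with `a`, and the unitary polar factor `W b * |W b|⁻¹`
conjugates `a` to `b`. All of this can be read modulo an ideal `I`: if `b ≡ a`, then
`W b ≡ W a = 1`, hence also `|W b| ≡ 1` and `W b * |W b|⁻¹ ≡ 1`.
-/

noncomputable section

variable {H : Type*} [NormedAddCommGroup H] [InnerProductSpace ℂ H] [CompleteSpace H]

/-- The unitary Fredholm group. -/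
def Uc (H : Type*) [NormedAddCommGroup H] [InnerProductSpace ℂ H] [CompleteSpace H] :
    Set (H →L[ℂ] H) :=
  {u | u ∈ unitary (H →L[ℂ] H) ∧ IsCompactOperator ⇑(u - 1)}

/-- The unitary orbit of an operator `A` under the Fredholm group. -/
def orbit (A : H →L[ℂ] H) : Set (H →L[ℂ] H) :=
  {b | ∃ u ∈ Uc H, b = u * A * star u}

open Polynomial
open scoped Ring

section Nodal

variable {K A : Type*} [Field K] [Ring A] [Algebra K A] {S : Finset K} {a : A}

lemma nodal_dvd_of_forall_eval_eq_zero {p : K[X]} (hp : ∀ x ∈ S, p.eval x = 0) :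
    Lagrange.nodal S id ∣ p :=
  Finset.prod_dvd_of_coprime
    (fun _ _ _ _ hxy ↦ isCoprime_X_sub_C_of_isUnit_sub (sub_ne_zero.mpr hxy).isUnit)
    fun x hx ↦ dvd_iff_isRoot.mpr (hp x hx)

lemma aeval_eq_aeval_of_forall_eval_eq (ha : aeval a (Lagrange.nodal S id) = 0) {p q : K[X]}
    (hpq : ∀ x ∈ S, p.eval x = q.eval x) : aeval a p = aeval a q := by
  obtain ⟨r, hr⟩ : Lagrange.nodal S id ∣ p - q :=
    nodal_dvd_of_forall_eval_eq_zero fun x hx ↦ by rw [eval_sub, hpq x hx, sub_self]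
  rw [← sub_eq_zero, ← map_sub, hr, map_mul, ha, zero_mul]

end Nodal

section LagrangeIdempotents

variable {K A B : Type*} [Field K] [DecidableEq K] [Ring A] [Algebra K A] [Ring B] [Algebra K B]
  {S : Finset K} {a b : A}

/-- The value at `a` of the Lagrange basis polynomial of the set of nodes `S` at the node `z`. When
`a` is annihilated by `∏ z ∈ S, (X - z)`, this is the projection onto the eigenspace of `a` for the
eigenvalue `z` along the other eigenspaces. -/
def lagrangeIdempotent (S : Finset K) (a : A) (z : K) : A :=
  aeval a (Lagrange.basis S id z)

/-- The element carrying the eigenspaces of `a` to those of `b`: the sum, over the common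
eigenvalues `z ∈ S`, of the products of the two eigenprojections. -/
def eigenspaceIntertwiner (S : Finset K) (b a : A) : A :=
  ∑ z ∈ S, lagrangeIdempotent S b z * lagrangeIdempotent S a z

lemma eval_lagrangeBasis_id {x : K} (hx : x ∈ S) (z : K) :
    (Lagrange.basis S id z).eval x = if z = x then 1 else 0 := by
  split_ifs with hzx
  · subst hzx
    exact Lagrange.eval_basis_self Function.injective_id.injOn hx
  · exact Lagrange.eval_basis_of_ne (v := id) hzx hx

lemma isIdempotentElem_lagrangeIdempotent (ha : aeval a (Lagrange.nodal S id) = 0) (z : K) :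
    IsIdempotentElem (lagrangeIdempotent S a z) := by
  rw [IsIdempotentElem, lagrangeIdempotent, ← map_mul]
  refine aeval_eq_aeval_of_forall_eval_eq ha fun x hx ↦ ?_
  simp [eval_lagrangeBasis_id hx]

lemma sum_lagrangeIdempotent (ha : aeval a (Lagrange.nodal S id) = 0) :
    ∑ z ∈ S, lagrangeIdempotent S a z = 1 := by
  simp only [lagrangeIdempotent]
  rw [← map_sum, ← map_one (aeval (R := K) a)]
  refine aeval_eq_aeval_of_forall_eval_eq ha fun x hx ↦ ?_
  simp [eval_finsetSum, eval_lagrangeBasis_id hx, hx]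

lemma mul_lagrangeIdempotent (ha : aeval a (Lagrange.nodal S id) = 0) (z : K) :
    a * lagrangeIdempotent S a z = z • lagrangeIdempotent S a z := by
  have h : aeval a (X * Lagrange.basis S id z) = aeval a (C z * Lagrange.basis S id z) :=
    aeval_eq_aeval_of_forall_eval_eq ha fun x hx ↦ by
      by_cases hzx : z = x <;> simp [eval_lagrangeBasis_id hx, hzx]
  simpa [lagrangeIdempotent, Algebra.smul_def] using h

lemma lagrangeIdempotent_mul (ha : aeval a (Lagrange.nodal S id) = 0) (z : K) :
    lagrangeIdempotent S a z * a = z • lagrangeIdempotent S a z := by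
  have hcomm : Commute (aeval a (Lagrange.basis S id z)) (aeval a (X : K[X])) :=
    (Commute.all _ _).map (aeval a)
  rw [aeval_X] at hcomm
  exact hcomm.eq.trans (mul_lagrangeIdempotent ha z)

lemma eigenspaceIntertwiner_self (ha : aeval a (Lagrange.nodal S id) = 0) :
    eigenspaceIntertwiner S a a = 1 := by
  simp only [eigenspaceIntertwiner, (isIdempotentElem_lagrangeIdempotent ha _).eq,
    sum_lagrangeIdempotent ha]

lemma semiconjBy_eigenspaceIntertwiner (ha : aeval a (Lagrange.nodal S id) = 0)
    (hb : aeval b (Lagrange.nodal S id) = 0) : SemiconjBy (eigenspaceIntertwiner S b a) a b := by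
  simp only [SemiconjBy, eigenspaceIntertwiner, Finset.sum_mul, Finset.mul_sum]
  refine Finset.sum_congr rfl fun z _ ↦ ?_
  rw [mul_assoc, lagrangeIdempotent_mul ha, ← mul_assoc, mul_lagrangeIdempotent hb,
    mul_smul_comm, smul_mul_assoc]

lemma map_lagrangeIdempotent (φ : A →ₐ[K] B) (S : Finset K) (a : A) (z : K) :
    φ (lagrangeIdempotent S a z) = lagrangeIdempotent S (φ a) z :=
  (aeval_algHom_apply φ a _).symm

lemma map_eigenspaceIntertwiner (φ : A →ₐ[K] B) (S : Finset K) (b a : A) :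
    φ (eigenspaceIntertwiner S b a) = eigenspaceIntertwiner S (φ b) (φ a) := by
  simp only [eigenspaceIntertwiner, map_sum, map_mul, map_lagrangeIdempotent]

lemma eigenspaceIntertwiner_sub_one_mem (I : TwoSidedIdeal A)
    (ha : aeval a (Lagrange.nodal S id) = 0) (hab : b - a ∈ I) :
    eigenspaceIntertwiner S b a - 1 ∈ I := by
  let π : A →ₐ[K] I.ringCon.Quotient := I.ringCon.mkₐ K
  have hπ (x y : A) : π x = π y ↔ x - y ∈ I := (RingCon.eq _).trans (I.rel_iff x y)
  rw [← hπ, map_eigenspaceIntertwiner, (hπ b a).mpr hab, ← map_eigenspaceIntertwiner,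
    eigenspaceIntertwiner_self ha]

lemma continuous_eigenspaceIntertwiner_left [TopologicalSpace A] [IsTopologicalRing A]
    (S : Finset K) (a : A) : Continuous fun b ↦ eigenspaceIntertwiner S b a :=
  continuous_finsetSum _ fun z _ ↦
    (Polynomial.continuous_aeval (Lagrange.basis S id z)).mul continuous_const

end LagrangeIdempotents

section Normal

variable {𝒜 : Type*} [CStarAlgebra 𝒜] {S : Finset ℂ} {a b : 𝒜}

lemma aeval_nodal_spectrum_eq_zero (a : 𝒜) [IsStarNormal a] (ha : (spectrum ℂ a).Finite) :
    aeval a (Lagrange.nodal ha.toFinset id) = 0 := by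
  rw [← cfc_polynomial _ a, ← cfc_zero ℂ a]
  exact cfc_congr fun x hx ↦
    Lagrange.eval_nodal_at_node (v := id) (ha.mem_toFinset.mpr hx)

lemma star_lagrangeIdempotent [IsStarNormal a] (ha : aeval a (Lagrange.nodal S id) = 0) (z : ℂ) :
    star (lagrangeIdempotent S a z) = lagrangeIdempotent S a z := by
  have hnormal : IsStarNormal (lagrangeIdempotent S a z) := by
    rw [lagrangeIdempotent, ← cfc_polynomial _ a]
    exact cfc_predicate _ a
  exact (isIdempotentElem_lagrangeIdempotent ha z).isSelfAdjoint_iff_isStarNormal.mpr hnormal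

lemma star_eigenspaceIntertwiner [IsStarNormal a] [IsStarNormal b]
    (ha : aeval a (Lagrange.nodal S id) = 0) (hb : aeval b (Lagrange.nodal S id) = 0) :
    star (eigenspaceIntertwiner S b a) = eigenspaceIntertwiner S a b := by
  simp only [eigenspaceIntertwiner, star_sum, star_mul, star_lagrangeIdempotent ha,
    star_lagrangeIdempotent hb]

end Normal

lemma commute_ringInverse_left {M : Type*} [MonoidWithZero M] {x y : M} (h : Commute x y) :
    Commute x⁻¹ʳ y := by
  by_cases hx : IsUnit x
  · obtain ⟨u, rfl⟩ := hx
    rw [Ring.inverse_unit]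
    exact h.units_inv_left
  · rw [Ring.inverse_non_unit x hx]
    exact Commute.zero_left y

section UnitaryPart

variable {𝒜 : Type*} [CStarAlgebra 𝒜] [PartialOrder 𝒜] [StarOrderedRing 𝒜] {s a b : 𝒜}

/-- The unitary factor `s * |s|⁻¹` in the polar decomposition of an invertible element `s`. Where
`|s|` is not invertible this has the junk value `0`. -/
def unitaryPart (s : 𝒜) : 𝒜 := s * (CFC.abs s)⁻¹ʳ

lemma isUnit_cfcAbs (hs : IsUnit s) : IsUnit (CFC.abs s) :=
  (CFC.isUnit_sqrt_iff (star s * s)).mpr (hs.star.mul hs)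

lemma unitaryPart_mem_unitary (hs : IsUnit s) : unitaryPart s ∈ unitary 𝒜 := by
  have habs : IsUnit (CFC.abs s) := isUnit_cfcAbs hs
  have hunit : IsUnit (unitaryPart s) := hs.mul habs.ringInverse
  refine hunit.mem_unitary_of_star_mul_self ?_
  have hstar : star (CFC.abs s)⁻¹ʳ = (CFC.abs s)⁻¹ʳ :=
    (IsSelfAdjoint.of_nonneg (CFC.abs_nonneg s)).ringInverse
  calc star (unitaryPart s) * unitaryPart s
      = (CFC.abs s)⁻¹ʳ * (star s * s) * (CFC.abs s)⁻¹ʳ := by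
        simp only [unitaryPart, star_mul, hstar, mul_assoc]
    _ = ((CFC.abs s)⁻¹ʳ * CFC.abs s) * (CFC.abs s * (CFC.abs s)⁻¹ʳ) := by
        simp only [← CFC.abs_mul_abs, mul_assoc]
    _ = 1 := by rw [Ring.inverse_mul_cancel _ habs, Ring.mul_inverse_cancel _ habs, one_mul]

lemma continuousOn_unitaryPart : ContinuousOn (unitaryPart : 𝒜 → 𝒜) {s | IsUnit s} := by
  refine continuousOn_id.mul fun s hs ↦ ContinuousAt.continuousWithinAt ?_
  obtain ⟨u, hu⟩ := isUnit_cfcAbs hs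
  have hinv : ContinuousAt Ring.inverse (CFC.abs s) := hu ▸ NormedRing.inverse_continuousAt u
  exact hinv.comp CFC.continuous_abs.continuousAt

lemma semiconjBy_unitaryPart (h : SemiconjBy s a b) (hstar : SemiconjBy (star s) b a) :
    SemiconjBy (unitaryPart s) a b := by
  have habs : Commute (CFC.abs s) a := Commute.cfcₙ_nnreal (hstar.mul_left h) NNReal.sqrt
  exact h.mul_left (commute_ringInverse_left habs)

lemma cfcAbs_sub_one_mem (I : TwoSidedIdeal 𝒜) (hs : s - 1 ∈ I) (hstar : star s - 1 ∈ I) :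
    CFC.abs s - 1 ∈ I := by
  have hunit : IsUnit (1 + CFC.abs s) :=
    (isStrictlyPositive_one.add_nonneg (CFC.abs_nonneg s)).isUnit
  have hsq : star s * s - 1 ∈ I := by
    have : star s * s - 1 = star s * (s - 1) + (star s - 1) := by noncomm_ring
    rw [this]
    exact I.add_mem (I.mul_mem_left _ _ hs) hstar
  have hfactor : (1 + CFC.abs s) * (CFC.abs s - 1) = star s * s - 1 := by
    rw [← CFC.abs_mul_abs]
    noncomm_ring
  rw [← Ring.inverse_mul_cancel_left _ (CFC.abs s - 1) hunit, hfactor]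
  exact I.mul_mem_left _ _ hsq

lemma unitaryPart_sub_one_mem (I : TwoSidedIdeal 𝒜) (hunit : IsUnit s) (hs : s - 1 ∈ I)
    (hstar : star s - 1 ∈ I) : unitaryPart s - 1 ∈ I := by
  have hfactor : unitaryPart s - 1 = (s - 1 - (CFC.abs s - 1)) * (CFC.abs s)⁻¹ʳ := by
    rw [sub_sub_sub_cancel_right, sub_mul, Ring.mul_inverse_cancel _ (isUnit_cfcAbs hunit),
      unitaryPart]
  rw [hfactor]
  exact I.mul_mem_right _ _ (I.sub_mem hs (cfcAbs_sub_one_mem I hs hstar))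

end UnitaryPart

section CrossSection

variable {𝒜 : Type*} [CStarAlgebra 𝒜] {S : Finset ℂ} {a b u : 𝒜} {I : TwoSidedIdeal 𝒜}

/-- The group of unitaries congruent to `1` modulo the ideal `I`, as a set. For `I` the ideal of
compact operators it is the unitary Fredholm group. -/
def unitaryModulo (I : TwoSidedIdeal 𝒜) : Set 𝒜 :=
  {u | u ∈ unitary 𝒜 ∧ u - 1 ∈ I}

/-- The orbit of `a` under conjugation by the unitaries congruent to `1` modulo the ideal `I`. -/
def orbitModulo (I : TwoSidedIdeal 𝒜) (a : 𝒜) : Set 𝒜 :=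
  {b | ∃ u ∈ unitaryModulo I, b = u * a * star u}

lemma sub_mem_of_mem_orbitModulo (hb : b ∈ orbitModulo I a) : b - a ∈ I := by
  obtain ⟨u, ⟨hu, huI⟩, rfl⟩ := hb
  have hcomm : u * a * star u - a = ((u - 1) * a - a * (u - 1)) * star u := by
    have : a * u * star u = a := by rw [mul_assoc, Unitary.mul_star_self_of_mem hu, mul_one]
    simp only [sub_mul, mul_sub, one_mul, mul_one, this]
    abel
  rw [hcomm]
  exact I.mul_mem_right _ _ (I.sub_mem (I.mul_mem_right _ _ huI) (I.mul_mem_left _ _ huI))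

lemma isStarNormal_unitary_conj [IsStarNormal a] (hu : u ∈ unitary 𝒜) :
    IsStarNormal (u * a * star u) :=
  (inferInstance : IsStarNormal (Unitary.conjStarAlgAut ℂ 𝒜 ⟨u, hu⟩ a))

lemma aeval_unitary_conj (hu : u ∈ unitary 𝒜) (a : 𝒜) (p : ℂ[X]) :
    aeval (u * a * star u) p = u * aeval a p * star u :=
  aeval_algHom_apply (Unitary.conjStarAlgAut ℂ 𝒜 ⟨u, hu⟩) a p

lemma unitaryPart_eigenspaceIntertwiner_mem [PartialOrder 𝒜] [StarOrderedRing 𝒜]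
    [IsStarNormal a] [IsStarNormal b] (ha : aeval a (Lagrange.nodal S id) = 0)
    (hb : aeval b (Lagrange.nodal S id) = 0) (hba : b - a ∈ I)
    (hunit : IsUnit (eigenspaceIntertwiner S b a)) :
    unitaryPart (eigenspaceIntertwiner S b a) ∈ unitaryModulo I := by
  have hab : a - b ∈ I := neg_sub b a ▸ I.neg_mem hba
  refine ⟨unitaryPart_mem_unitary hunit, unitaryPart_sub_one_mem I hunit
    (eigenspaceIntertwiner_sub_one_mem I ha hba) ?_⟩
  rw [star_eigenspaceIntertwiner ha hb]
  exact eigenspaceIntertwiner_sub_one_mem I hb hab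

lemma unitaryPart_eigenspaceIntertwiner_conj [PartialOrder 𝒜] [StarOrderedRing 𝒜]
    [IsStarNormal a] [IsStarNormal b] (ha : aeval a (Lagrange.nodal S id) = 0)
    (hb : aeval b (Lagrange.nodal S id) = 0) (hunit : IsUnit (eigenspaceIntertwiner S b a)) :
    unitaryPart (eigenspaceIntertwiner S b a) * a *
      star (unitaryPart (eigenspaceIntertwiner S b a)) = b := by
  have hsemiconj : SemiconjBy (unitaryPart (eigenspaceIntertwiner S b a)) a b :=
    semiconjBy_unitaryPart (semiconjBy_eigenspaceIntertwiner ha hb)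
      (star_eigenspaceIntertwiner ha hb ▸ semiconjBy_eigenspaceIntertwiner hb ha)
  rw [hsemiconj.eq, mul_assoc, Unitary.mul_star_self_of_mem (unitaryPart_mem_unitary hunit),
    mul_one]

lemma exists_forall_isUnit_eigenspaceIntertwiner (ha : aeval a (Lagrange.nodal S id) = 0) :
    ∃ C : ℝ, 0 < C ∧ ∀ b, ‖b - a‖ < C → IsUnit (eigenspaceIntertwiner S b a) := by
  have hself : IsUnit (eigenspaceIntertwiner S a a) :=
    eigenspaceIntertwiner_self ha ▸ isUnit_one
  have hnhds : ∀ᶠ b in nhds a, IsUnit (eigenspaceIntertwiner S b a) :=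
    (continuous_eigenspaceIntertwiner_left S a).continuousAt.eventually
      (Units.isOpen.mem_nhds hself)
  simpa only [dist_eq_norm] using Metric.eventually_nhds_iff.mp hnhds

theorem stmt12_general (I : TwoSidedIdeal 𝒜) (a : 𝒜) [IsStarNormal a]
    (hspec : (spectrum ℂ a).Finite) :
    ∃ C : ℝ, 0 < C ∧ ∃ θ : 𝒜 → 𝒜, ContinuousOn θ {b | ‖b - a‖ < C} ∧
      ∀ b, b ∈ orbitModulo I a → ‖b - a‖ < C →
        θ b ∈ unitaryModulo I ∧ θ b * a * star (θ b) = b := by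
  let _ := CStarAlgebra.spectralOrder 𝒜
  let _ := CStarAlgebra.spectralOrderedRing 𝒜
  have ha := aeval_nodal_spectrum_eq_zero a hspec
  obtain ⟨C, hC, hunit⟩ := exists_forall_isUnit_eigenspaceIntertwiner ha
  refine ⟨C, hC, fun b ↦ unitaryPart (eigenspaceIntertwiner hspec.toFinset b a), ?_, ?_⟩
  · exact continuousOn_unitaryPart.comp
      (continuous_eigenspaceIntertwiner_left _ a).continuousOn hunit
  · intro b hb hbC
    have hba : b - a ∈ I := sub_mem_of_mem_orbitModulo hb
    obtain ⟨u, ⟨hu, -⟩, rfl⟩ := hb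
    have := isStarNormal_unitary_conj (a := a) hu
    have hb : aeval (u * a * star u) (Lagrange.nodal hspec.toFinset id) = 0 := by
      rw [aeval_unitary_conj hu, ha, mul_zero, zero_mul]
    exact ⟨unitaryPart_eigenspaceIntertwiner_mem ha hb hba (hunit _ hbC),
      unitaryPart_eigenspaceIntertwiner_conj ha hb (hunit _ hbC)⟩

end CrossSection

/-- The two-sided ideal of compact operators on a normed space. -/
def compactIdeal (𝕜 E : Type*) [NontriviallyNormedField 𝕜] [NormedAddCommGroup E]
    [NormedSpace 𝕜 E] : TwoSidedIdeal (E →L[𝕜] E) :=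
  .mk' {T | IsCompactOperator T} isCompactOperator_zero (fun hS hT ↦ hS.add hT) (fun hT ↦ hT.neg)
    (fun {S _} hT ↦ hT.clm_comp S) (fun {_ S} hT ↦ hT.comp_clm S)

lemma mem_compactIdeal {𝕜 E : Type*} [NontriviallyNormedField 𝕜] [NormedAddCommGroup E]
    [NormedSpace 𝕜 E] {T : E →L[𝕜] E} : T ∈ compactIdeal 𝕜 E ↔ IsCompactOperator T :=
  TwoSidedIdeal.mem_mk' ..

lemma unitaryModulo_compactIdeal : unitaryModulo (compactIdeal ℂ H) = Uc H :=
  Set.ext fun _ ↦ and_congr_right' mem_compactIdeal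

lemma orbitModulo_compactIdeal (A : H →L[ℂ] H) : orbitModulo (compactIdeal ℂ H) A = orbit A := by
  rw [orbitModulo, unitaryModulo_compactIdeal, orbit]

/-- The map `π_A(u) = uAu*` has a continuous local cross section around `A`, provided
`A` is self-adjoint with finite spectrum. -/
theorem stmt12 (A : H →L[ℂ] H) (hA : star A = A) (hspec : (spectrum ℂ A).Finite) :
    ∃ C : ℝ, 0 < C ∧ ∃ θ : (H →L[ℂ] H) → (H →L[ℂ] H),
      ContinuousOn θ {b | b ∈ orbit A ∧ ‖b - A‖ < C} ∧
      ∀ b, b ∈ orbit A → ‖b - A‖ < C → θ b ∈ Uc H ∧ θ b * A * star (θ b) = b := by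
  have : IsStarNormal A := IsSelfAdjoint.isStarNormal hA
  obtain ⟨C, hC, θ, hθ, h⟩ := stmt12_general (compactIdeal ℂ H) A hspec
  rw [orbitModulo_compactIdeal, unitaryModulo_compactIdeal] at h
  exact ⟨C, hC, θ, hθ.mono fun _ hb ↦ hb.2, h⟩
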